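/- Let (X,d) be a metric space and ν a Borel probability measure on X satisfying the Gaussian enlargement property with parameter τ > 0. Let F : X → ℝ be L-Lipschitz with L > 0, and for a ∈ (0,1) let q_a(F) = inf{r : ν({F ≤ r}) ≥ a}. Then for every 0 < a < b < 1, q_b(F) - q_a(F) ≤ L·√(2τ)·(Φ⁻¹(b) - Φ⁻¹(a)). Moreover, if m is a median of F (i.e. ν({F ≤ m}) ≥ 1/2 and ν({F ≥ m}) ≥ 1/2), then for every r > 0, ν({F ≥ m+r}) ≤ 1 - Φ(r/(L√(2τ))) and ν({F ≤ m-r}) ≤ 1 - Φ(r/(L√(2τ))). -/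

import Mathlib

open Real MeasureTheory

/-- The standard Gaussian density. -/
noncomputable def gaussPdf (z : ℝ) : ℝ := (Real.sqrt (2 * Real.pi))⁻¹ * Real.exp (-z ^ 2 / 2)

/-- The standard normal CDF. -/
noncomputable def Phi (r : ℝ) : ℝ := ∫ z in Set.Iic r, gaussPdf z

/-- The inverse of the standard normal CDF. -/
noncomputable def PhiInv : ℝ → ℝ := Function.invFun Phi

/-- The open `r`-enlargement `E_r = {y : d(y,E) < r}` of a set (with `E_0 = E`). -/
noncomputable def enlarge {X : Type*} [MetricSpace X] (E : Set X) (r : ℝ) : Set X :=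
  if r = 0 then E else Metric.thickening r E

/-- A Borel probability measure `ν` on a metric space satisfies the Gaussian enlargement
property with parameter `τ > 0` if for every Borel set `E` with `0 < ν(E) < 1` and every
`r ≥ 0`, `ν(E_r) ≥ Φ(Φ⁻¹(ν(E)) + r/√(2τ))`. -/
def GaussianEnlargement {X : Type*} [MetricSpace X] [MeasurableSpace X]
    (ν : Measure X) (τ : ℝ) : Prop :=
  ∀ E : Set X, MeasurableSet E → 0 < ν E → ν E < 1 → ∀ r : ℝ, 0 ≤ r →
    ENNReal.ofReal (Phi (PhiInv (ν E).toReal + r / Real.sqrt (2 * τ))) ≤ ν (enlarge E r)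

/-- The distance `d(A,B) = inf {d(a,b) : a ∈ A, b ∈ B}` between two sets. -/
noncomputable def setDist {X : Type*} [MetricSpace X] (A B : Set X) : ℝ :=
  sInf (Set.image2 dist A B)

/-- The `a`-quantile `q_a(F) = inf {r : ν(F ≤ r) ≥ a}` of an observable `F`. -/
noncomputable def quantile {X : Type*} [MeasurableSpace X] (ν : Measure X)
    (F : X → ℝ) (a : ℝ) : ℝ :=
  sInf {r : ℝ | ENNReal.ofReal a ≤ ν {x | F x ≤ r}}

theorem gaussPdf_pos (z : ℝ) : 0 < gaussPdf z := by unfold gaussPdf; positivity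

theorem gaussPdf_cont : Continuous gaussPdf := by unfold gaussPdf; fun_prop

theorem gaussPdf_eq : gaussPdf = ProbabilityTheory.gaussianPDFReal 0 1 := by
  funext z
  simp [gaussPdf, ProbabilityTheory.gaussianPDFReal]

theorem gaussPdf_int : Integrable gaussPdf := by
  rw [gaussPdf_eq]; exact ProbabilityTheory.integrable_gaussianPDFReal 0 1

theorem gaussPdf_total : ∫ z, gaussPdf z = 1 := by
  rw [gaussPdf_eq]; exact ProbabilityTheory.integral_gaussianPDFReal_eq_one 0 (by norm_num)

theorem Phi_sub (a b : ℝ) : Phi b - Phi a = ∫ z in a..b, gaussPdf z :=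
  intervalIntegral.integral_Iic_sub_Iic gaussPdf_int.integrableOn gaussPdf_int.integrableOn

theorem Phi_strictMono : StrictMono Phi := by
  intro a b hab
  have h := Phi_sub a b
  have : 0 < ∫ z in a..b, gaussPdf z :=
    intervalIntegral.intervalIntegral_pos_of_pos gaussPdf_int.intervalIntegrable gaussPdf_pos hab
  linarith

theorem Phi_cont : Continuous Phi := by
  have : Phi = fun r => Phi 0 + ∫ z in (0:ℝ)..r, gaussPdf z := by
    funext r; rw [← Phi_sub]; ring
  rw [this]
  exact continuous_const.add
    (intervalIntegral.continuous_primitive (fun a b => gaussPdf_int.intervalIntegrable) 0)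

theorem Phi_neg (r : ℝ) : Phi (-r) = 1 - Phi r := by
  have h1 : Phi (-r) = ∫ z in Set.Ioi r, gaussPdf z := by
    unfold Phi
    have := integral_comp_neg_Iic (-r) gaussPdf
    rw [neg_neg] at this
    rw [← this]
    congr 1
    funext z
    simp [gaussPdf]
  have h2 : Phi r + ∫ z in Set.Ioi r, gaussPdf z = 1 := by
    unfold Phi
    rw [intervalIntegral.integral_Iic_add_Ioi gaussPdf_int.integrableOn gaussPdf_int.integrableOn]
    exact gaussPdf_total
  linarith

theorem Phi_zero : Phi 0 = 1 / 2 := by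
  have := Phi_neg 0
  rw [neg_zero] at this
  linarith

theorem Phi_top : Filter.Tendsto Phi Filter.atTop (nhds 1) := by
  rw [← gaussPdf_total]
  exact (aecover_Iic Filter.tendsto_id).integral_tendsto_of_countably_generated gaussPdf_int

theorem Phi_bot : Filter.Tendsto Phi Filter.atBot (nhds 0) := by
  have h : Phi = fun r => 1 - Phi (-r) := by
    funext r; rw [Phi_neg]; ring
  rw [h]
  have := (Phi_top.comp Filter.tendsto_neg_atBot_atTop).const_sub 1
  simpa using this

theorem Phi_lt_one (r : ℝ) : Phi r < 1 :=
  lt_of_lt_of_le (Phi_strictMono (lt_add_one r)) (Phi_strictMono.monotone.ge_of_tendsto Phi_top _)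

theorem Phi_PhiInv {a : ℝ} (h0 : 0 < a) (h1 : a < 1) : Phi (PhiInv a) = a := by
  apply Function.invFun_eq
  obtain ⟨x, hx⟩ := (Phi_bot.eventually (gt_mem_nhds h0)).exists
  obtain ⟨y, hy⟩ := (Phi_top.eventually (lt_mem_nhds h1)).exists
  exact mem_range_of_exists_le_of_exists_ge Phi_cont ⟨x, hx.le⟩ ⟨y, hy.le⟩

theorem PhiInv_le {a b : ℝ} (h0 : 0 < a) (hab : a ≤ b) (h1 : b < 1) : PhiInv a ≤ PhiInv b := by
  rw [← Phi_strictMono.le_iff_le, Phi_PhiInv h0 (by linarith), Phi_PhiInv (by linarith) h1]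
  exact hab

theorem PhiInv_half : PhiInv (1 / 2) = 0 := by
  apply Phi_strictMono.injective
  rw [Phi_PhiInv (by norm_num) (by norm_num), Phi_zero]

theorem key_enl {X : Type*} [MetricSpace X] [MeasurableSpace X] [BorelSpace X]
    (ν : Measure X) [IsProbabilityMeasure ν] (τ : ℝ)
    (hGEP : GaussianEnlargement ν τ)
    (L : ℝ) (hL : 0 < L) (F : X → ℝ) (hF : LipschitzWith (Real.toNNReal L) F)
    (a c s : ℝ) (ha : 0 < a) (hs : 0 < s)
    (hc : ENNReal.ofReal a ≤ ν {x | F x ≤ c}) :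
    ENNReal.ofReal (Phi (PhiInv a + s / Real.sqrt (2 * τ))) ≤ ν {x | F x < c + L * s} := by
  have hm : MeasurableSet {x | F x ≤ c} := measurableSet_le hF.continuous.measurable measurable_const
  have hpos : 0 < ν {x | F x ≤ c} := lt_of_lt_of_le (by simpa using ha) hc
  have hLs : 0 < L * s := mul_pos hL hs
  rcases (prob_le_one (μ := ν) (s := {x | F x ≤ c})).lt_or_eq with h1 | h1
  · have hfin := measure_ne_top ν {x | F x ≤ c}
    have hle : a ≤ (ν {x | F x ≤ c}).toReal := (ENNReal.ofReal_le_iff_le_toReal hfin).1 hc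
    have hlt : (ν {x | F x ≤ c}).toReal < 1 := by
      have := (ENNReal.toReal_lt_toReal hfin ENNReal.one_ne_top).2 h1
      simpa using this
    refine le_trans ?_ ((hGEP _ hm hpos h1 s hs.le).trans (measure_mono ?_))
    · apply ENNReal.ofReal_le_ofReal
      apply Phi_strictMono.monotone
      have := PhiInv_le ha hle hlt
      linarith
    · intro y hy
      rw [enlarge, if_neg hs.ne', Metric.mem_thickening_iff] at hy
      obtain ⟨z, hz, hd⟩ := hy
      have h2 := hF.dist_le_mul y z
      rw [Real.coe_toNNReal L hL.le, Real.dist_eq] at h2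
      have h3 := le_abs_self (F y - F z)
      have h4 := mul_lt_mul_of_pos_left hd hL
      simp only [Set.mem_ofPred_eq] at hz ⊢
      linarith
  · calc _ ≤ ENNReal.ofReal 1 := ENNReal.ofReal_le_ofReal (Phi_lt_one _).le
      _ = ν {x | F x ≤ c} := by rw [h1, ENNReal.ofReal_one]
      _ ≤ _ := measure_mono (fun x hx => by
        simp only [Set.mem_ofPred_eq] at hx ⊢; linarith)

theorem tail_bd {X : Type*} [MetricSpace X] [MeasurableSpace X] [BorelSpace X]
    (ν : Measure X) [IsProbabilityMeasure ν] (τ : ℝ)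
    (hGEP : GaussianEnlargement ν τ)
    (L : ℝ) (hL : 0 < L) (F : X → ℝ) (hF : LipschitzWith (Real.toNNReal L) F)
    (m : ℝ) (hm : ENNReal.ofReal (1 / 2) ≤ ν {x | F x ≤ m}) (r : ℝ) (hr : 0 < r) :
    (ν {x | m + r ≤ F x}).toReal ≤ 1 - Phi (r / (L * Real.sqrt (2 * τ))) := by
  have h := key_enl ν τ hGEP L hL F hF (1/2) m (r / L) (by norm_num) (by positivity) hm
  rw [PhiInv_half, zero_add, div_div, mul_div_cancel₀ r hL.ne',
    ENNReal.ofReal_le_iff_le_toReal (measure_ne_top _ _)] at h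
  have hms : MeasurableSet {x | F x < m + r} :=
    measurableSet_lt hF.continuous.measurable measurable_const
  have h2 := probReal_add_probReal_compl (μ := ν) hms
  have h3 : {x | F x < m + r}ᶜ = {x | m + r ≤ F x} := by ext x; simp
  rw [h3] at h2
  simp only [Measure.real] at h2
  linarith

theorem quant_nonempty {X : Type*} [MeasurableSpace X]
    (ν : Measure X) [IsProbabilityMeasure ν] (F : X → ℝ) (hF : Measurable F) (a : ℝ) (ha : a < 1) :
    {r : ℝ | ENNReal.ofReal a ≤ ν {x | F x ≤ r}}.Nonempty := by
  have := Measure.isProbabilityMeasure_map (μ := ν) hF.aemeasurable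
  obtain ⟨r, hr⟩ := ((ProbabilityTheory.tendsto_cdf_atTop (ν.map F)).eventually
    (lt_mem_nhds ha)).exists
  refine ⟨r, ?_⟩
  rw [ProbabilityTheory.cdf_eq_real, Measure.real, Measure.map_apply hF measurableSet_Iic] at hr
  exact (ENNReal.ofReal_le_iff_le_toReal (measure_ne_top _ _)).2 hr.le

theorem quant_bdd {X : Type*} [MeasurableSpace X]
    (ν : Measure X) [IsProbabilityMeasure ν] (F : X → ℝ) (hF : Measurable F) (a : ℝ) (ha : 0 < a) :
    BddBelow {r : ℝ | ENNReal.ofReal a ≤ ν {x | F x ≤ r}} := by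
  have := Measure.isProbabilityMeasure_map (μ := ν) hF.aemeasurable
  obtain ⟨r, hr⟩ := ((ProbabilityTheory.tendsto_cdf_atBot (ν.map F)).eventually
    (gt_mem_nhds ha)).exists
  refine ⟨r, fun t ht => ?_⟩
  rw [ProbabilityTheory.cdf_eq_real, Measure.real, Measure.map_apply hF measurableSet_Iic] at hr
  by_contra hlt
  push Not at hlt
  have h1 : ENNReal.ofReal a ≤ ν (F ⁻¹' Set.Iic r) :=
    le_trans ht (measure_mono fun x (hx : F x ≤ t) => (hx.trans hlt.le : F x ≤ r))
  have := (ENNReal.ofReal_le_iff_le_toReal (measure_ne_top _ _)).1 h1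
  linarith

/-- Lipschitz quantile estimates: if `ν` satisfies the Gaussian enlargement property with
parameter `τ` and `F` is `L`-Lipschitz, then `q_b(F) - q_a(F) ≤ L√(2τ)(Φ⁻¹(b) - Φ⁻¹(a))`
for `0 < a < b < 1`; and if `m` is a median of `F`, then for every `r > 0`,
`ν(F ≥ m+r) ≤ 1 - Φ(r/(L√(2τ)))` and `ν(F ≤ m-r) ≤ 1 - Φ(r/(L√(2τ)))`. -/
theorem stmt13 {X : Type*} [MetricSpace X] [MeasurableSpace X] [BorelSpace X]
    (ν : Measure X) [IsProbabilityMeasure ν] (τ : ℝ) (hτ : 0 < τ)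
    (hGEP : GaussianEnlargement ν τ)
    (L : ℝ) (hL : 0 < L) (F : X → ℝ) (hF : LipschitzWith (Real.toNNReal L) F) :
    (∀ a b : ℝ, 0 < a → a < b → b < 1 →
      quantile ν F b - quantile ν F a ≤
        L * Real.sqrt (2 * τ) * (PhiInv b - PhiInv a)) ∧
    (∀ m : ℝ, ENNReal.ofReal (1 / 2) ≤ ν {x | F x ≤ m} →
      ENNReal.ofReal (1 / 2) ≤ ν {x | m ≤ F x} →
      ∀ r > (0 : ℝ),
        (ν {x | m + r ≤ F x}).toReal ≤ 1 - Phi (r / (L * Real.sqrt (2 * τ))) ∧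
        (ν {x | F x ≤ m - r}).toReal ≤ 1 - Phi (r / (L * Real.sqrt (2 * τ)))) := by
  have hs : 0 < Real.sqrt (2 * τ) := Real.sqrt_pos.2 (by linarith)
  have hmeas := hF.continuous.measurable
  refine ⟨?_, ?_⟩
  · intro a b ha hab hb
    have hlt : PhiInv a < PhiInv b := by
      rw [← Phi_strictMono.lt_iff_lt, Phi_PhiInv ha (by linarith), Phi_PhiInv (by linarith) hb]
      exact hab
    rw [sub_le_comm]
    apply le_csInf (quant_nonempty ν F hmeas a (by linarith))
    intro c hc
    have h := key_enl ν τ hGEP L hL F hF a c (Real.sqrt (2 * τ) * (PhiInv b - PhiInv a)) ha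
      (mul_pos hs (by linarith)) hc
    rw [mul_div_cancel_left₀ _ hs.ne', add_sub_cancel, Phi_PhiInv (by linarith) hb] at h
    have h2 : quantile ν F b ≤ c + L * (Real.sqrt (2 * τ) * (PhiInv b - PhiInv a)) := by
      apply csInf_le (quant_bdd ν F hmeas b (by linarith))
      exact h.trans (measure_mono fun x hx => by
        simp only [Set.mem_ofPred_eq] at hx ⊢; exact hx.le)
    linarith
  · intro m h1 h2 r hr
    refine ⟨tail_bd ν τ hGEP L hL F hF m h1 r hr, ?_⟩
    have hF' : LipschitzWith (Real.toNNReal L) (fun x => - F x) := hF.neg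
    have h3 := tail_bd ν τ hGEP L hL (fun x => - F x) hF' (-m) (by simpa using h2) r hr
    have h4 : {x | -m + r ≤ -F x} = {x | F x ≤ m - r} := by
      ext x
      simp only [Set.mem_ofPred_eq]
      constructor <;> intro h <;> linarith
    rwa [h4] at h3
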